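/- arXiv:2202.06195 — 2 statements merged into one kernel-verified Lean document; each statement's English description precedes it below -/
import Mathlib

section
/- We have ∑_{n₁ > n₂ ≥ n₃ ≥ 1} 4^{n₁} / (binom(2n₁, n₁) · n₁² · (2n₂+1) · (2n₃−1)) = 8G², where G = ∑_{k=0}^∞ (−1)^k/(2k+1)² is Catalan's constant and the triple sum is over integers n₁ > n₂ ≥ n₃ ≥ 1. -/
open Real

open Filter MeasureTheory Set Topology

/-!
Put `w n = 4ⁿ / binom(2n, n)` and `E k t = w k · ∫₀ᵗ sin²ᵏ`. By the reduction formula for `∫ sin²ᵏ`,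
`E k t - E (k + 1) t = sin t cos t · w k sin²ᵏ t / (2k + 1)`. Integrated over `[0, π / 2]`, this
telescopes the sum over `n₁` into `4 ∫ E n₂ t dt = 4 ∫ (π / 2 - t) w n₂ (sin t)^(2 n₂) dt`; taken
pointwise, it then telescopes the sum over `n₂` into a multiple of `E n₃ t / (sin t cos t)`. The
remaining series `∑ E n₃ t / (2n₃ - 1)` is `Ti₂(tan t) - 2 cos t Ti₂(tan (t / 2))`, with `Ti₂` the
inverse tangent integral. The resulting integrand on `(0, π / 2)` has an explicit primitive built
from `Ti₂` and `R u = ∫₀ᵘ arccot v · Ti₂(v) / v dv`, which vanishes at `0`. The inversion `u ↦ u⁻¹`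
gives `R(∞) = 2 R 1 + Ti₂(1)²`, so that at `π / 2` the values of `R` cancel and `8 Ti₂(1)²` is left,
where `Ti₂(1)` is Catalan's constant.
-/

section General

lemma hasSum_sub_succ_of_antitone {a : ℕ → ℝ} {l : ℝ} (ha : Antitone a)
    (hl : Tendsto a atTop (𝓝 l)) (k : ℕ) :
    HasSum (fun n => a (k + n) - a (k + n + 1)) (a k - l) := by
  rw [hasSum_iff_tendsto_nat_of_nonneg fun n => sub_nonneg.2 (ha (k + n).le_succ)]
  have telescope (n : ℕ) : ∑ i ∈ Finset.range n, (a (k + i) - a (k + i + 1)) = a k - a (k + n) :=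
    Finset.sum_range_sub' (fun i => a (k + i)) n
  simp only [telescope]
  exact (hl.comp (tendsto_atTop_mono (Nat.le_add_left · k) tendsto_id)).const_sub (a k)

lemma tsum_ofReal_eq_of_hasSum {ι : Type*} {f : ι → ℝ} {x : ℝ} (h : HasSum f x)
    (hf : ∀ i, 0 ≤ f i) : ∑' i, ENNReal.ofReal (f i) = ENNReal.ofReal x := by
  rw [← h.tsum_eq, ENNReal.ofReal_tsum_of_nonneg hf h.summable]

lemma tsum_eq_of_tsum_ofReal_eq {ι : Type*} {f : ι → ℝ} {x : ℝ} (hf : ∀ i, 0 ≤ f i)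
    (hx : 0 ≤ x) (h : ∑' i, ENNReal.ofReal (f i) = ENNReal.ofReal x) : ∑' i, f i = x := by
  rw [← ENNReal.toReal_ofReal hx, ← h, ENNReal.tsum_toReal_eq fun _ => ENNReal.ofReal_ne_top]
  exact tsum_congr fun i => (ENNReal.toReal_ofReal (hf i)).symm

lemma eq_of_hasDerivAt_zero_of_pos {f : ℝ → ℝ} (hf : ∀ x, 0 < x → HasDerivAt f 0 x) {x y : ℝ}
    (hx : 0 < x) (hy : 0 < y) : f x = f y :=
  isOpen_Ioi.is_const_of_deriv_eq_zero isPreconnected_Ioi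
    (fun z hz => (hf z hz).differentiableAt.differentiableWithinAt)
    (fun z hz => (hf z hz).deriv) hx hy

lemma integral_integral_eq_integral_sub_mul {f : ℝ → ℝ} (hf : Continuous f) (a b : ℝ) :
    ∫ t in a..b, ∫ s in a..t, f s = ∫ t in a..b, (b - t) * f t := by
  have by_parts := intervalIntegral.integral_mul_deriv_eq_deriv_mul (a := a) (b := b)
    (fun t _ => (hasDerivAt_id t).const_sub b)
    (fun t _ => (hf.integral_hasStrictDerivAt a t).hasDerivAt)
    intervalIntegrable_const (hf.intervalIntegrable a b)
  simpa using by_parts.symm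

lemma intervalIntegrable_of_hasDerivAt_of_nonneg_of_tendsto {F f : ℝ → ℝ} {a b la lb : ℝ}
    (hab : a < b) (hderiv : ∀ t ∈ Ioo a b, HasDerivAt F (f t) t) (hf : ∀ t ∈ Ioo a b, 0 ≤ f t)
    (ha : Tendsto F (𝓝[>] a) (𝓝 la)) (hb : Tendsto F (𝓝[<] b) (𝓝 lb)) :
    IntervalIntegrable f volume a b := by
  have hF : ContinuousOn F (Ioo a b) := HasDerivAt.continuousOn hderiv
  rw [intervalIntegrable_iff_integrableOn_Ioc_of_le hab.le]
  refine intervalIntegral.integrableOn_deriv_of_nonneg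
    (continuousOn_Icc_extendFrom_Ioo hF ha hb) (fun t ht => ?_) hf
  refine (hderiv t ht).congr_of_eventuallyEq ?_
  filter_upwards [isOpen_Ioo.mem_nhds ht] with s hs using extendFrom_extends hF s hs

lemma integral_eq_sub_of_hasDerivAt_of_nonneg_of_tendsto {F f : ℝ → ℝ} {a b la lb : ℝ}
    (hab : a < b) (hderiv : ∀ t ∈ Ioo a b, HasDerivAt F (f t) t) (hf : ∀ t ∈ Ioo a b, 0 ≤ f t)
    (ha : Tendsto F (𝓝[>] a) (𝓝 la)) (hb : Tendsto F (𝓝[<] b) (𝓝 lb)) :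
    ∫ t in a..b, f t = lb - la :=
  intervalIntegral.integral_eq_sub_of_hasDerivAt_of_tendsto hab hderiv
    (intervalIntegrable_of_hasDerivAt_of_nonneg_of_tendsto hab hderiv hf ha hb) ha hb

lemma lintegral_Ioo_ofReal_eq_ofReal_integral {f : ℝ → ℝ} {a b : ℝ} (hab : a ≤ b)
    (hint : IntervalIntegrable f volume a b) (hf : ∀ t ∈ Ioo a b, 0 ≤ f t) :
    ∫⁻ t in Ioo a b, ENNReal.ofReal (f t) = ENNReal.ofReal (∫ t in a..b, f t) := by
  rw [intervalIntegral.integral_of_le hab, integral_Ioc_eq_integral_Ioo,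
    ofReal_integral_eq_lintegral_ofReal (hint.1.mono_set Ioo_subset_Ioc_self)
      ((ae_restrict_mem measurableSet_Ioo).mono hf)]

end General

section Trigonometric

lemma half_mem_Ioo_zero {a t : ℝ} (ht : t ∈ Ioo 0 a) : t / 2 ∈ Ioo 0 a :=
  ⟨half_pos ht.1, (half_lt_self ht.1).trans ht.2⟩

lemma sin_pos_of_mem_Ioo_zero_pi_div_two {t : ℝ} (ht : t ∈ Ioo 0 (π / 2)) : 0 < sin t :=
  sin_pos_of_pos_of_lt_pi ht.1 (by linarith [ht.2, pi_pos])

lemma cos_pos_of_mem_Ioo_zero_pi_div_two {t : ℝ} (ht : t ∈ Ioo 0 (π / 2)) : 0 < cos t :=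
  cos_pos_of_mem_Ioo ⟨by linarith [ht.1, pi_pos], ht.2⟩

lemma hasDerivAt_comp_tan {F : ℝ → ℝ} {c t : ℝ} (hs : sin t ≠ 0) (hc : cos t ≠ 0)
    (hF : HasDerivAt F (c / tan t) (tan t)) :
    HasDerivAt (fun s => F (tan s)) (c / (sin t * cos t)) t := by
  refine (hF.comp t (hasDerivAt_tan hc)).congr_deriv ?_
  rw [tan_eq_sin_div_cos]
  field_simp

lemma hasDerivAt_comp_half {F : ℝ → ℝ} {c t : ℝ}
    (hF : HasDerivAt F (c / (sin (t / 2) * cos (t / 2))) (t / 2)) :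
    HasDerivAt (fun s => F (s / 2)) (c / sin t) t := by
  have sin_eq : sin t = sin (t / 2) * cos (t / 2) * 2 := by
    rw [mul_comm, ← mul_assoc, ← sin_two_mul, mul_div_cancel₀ t two_ne_zero]
  refine (hF.comp t ((hasDerivAt_id t).div_const 2)).congr_deriv ?_
  rw [sin_eq, div_mul_div_comm, mul_one]

lemma continuousAt_comp_tan {F : ℝ → ℝ} (hF : Continuous F) {t : ℝ} (hc : cos t ≠ 0) :
    ContinuousAt (fun s => F (tan s)) t :=
  hF.continuousAt.comp (continuousAt_tan.2 hc)

lemma continuousAt_comp_tan_half {F : ℝ → ℝ} (hF : Continuous F) {t : ℝ} (hc : cos (t / 2) ≠ 0) :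
    ContinuousAt (fun s => F (tan (s / 2))) t :=
  (continuousAt_comp_tan hF hc).comp (f := fun s => s / 2)
    (continuous_id.div_const 2).continuousAt

lemma integral_sin_pow_mul_cos (n : ℕ) (a b : ℝ) :
    ∫ s in a..b, sin s ^ n * cos s = (sin b ^ (n + 1) - sin a ^ (n + 1)) / (n + 1) := by
  simpa using integral_sin_pow_mul_cos_pow_odd (a := a) (b := b) n 0

end Trigonometric

section InverseTangentIntegral

/-- The inverse tangent integral `Ti₂(u) = ∫₀ᵘ arctan v / v dv`, whose value at `1` is Catalan's
constant. The integrand is written as `dslope arctan 0` to fill in its singularity at `0`. -/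
noncomputable def invTanIntegral (u : ℝ) : ℝ := ∫ v in (0 : ℝ)..u, dslope arctan 0 v

/-- The iterated integral `∫₀ᵘ arccot v · Ti₂(v) / v dv`, where `arccot v = π / 2 - arctan v`. It is
the part of the primitive of `tripleSumKernel` that is not a polynomial in `Ti₂`. -/
noncomputable def arccotInvTanIntegral (u : ℝ) : ℝ :=
  ∫ v in (0 : ℝ)..u, (π / 2 - arctan v) * dslope invTanIntegral 0 v

lemma continuous_dslope_of_differentiable {f : ℝ → ℝ} (hf : Differentiable ℝ f) (a : ℝ) :
    Continuous (dslope f a) := by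
  rw [← continuousOn_univ, continuousOn_dslope univ_mem]
  exact ⟨hf.continuous.continuousOn, hf a⟩

lemma dslope_zero_of_ne {f : ℝ → ℝ} (hf : f 0 = 0) {u : ℝ} (hu : u ≠ 0) :
    dslope f 0 u = f u / u := by
  rw [dslope_of_ne f hu, slope_def_field, hf, sub_zero, sub_zero]

lemma differentiable_invTanIntegral : Differentiable ℝ invTanIntegral := fun u =>
  ((continuous_dslope_of_differentiable differentiable_arctan 0).integral_hasStrictDerivAt
    0 u).hasDerivAt.differentiableAt

lemma invTanIntegral_zero : invTanIntegral 0 = 0 := intervalIntegral.integral_same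

lemma hasDerivAt_invTanIntegral {u : ℝ} (hu : u ≠ 0) :
    HasDerivAt invTanIntegral (arctan u / u) u := by
  rw [← dslope_zero_of_ne arctan_zero hu]
  exact ((continuous_dslope_of_differentiable differentiable_arctan 0).integral_hasStrictDerivAt
    0 u).hasDerivAt

lemma hasStrictDerivAt_arccotInvTanIntegral (u : ℝ) : HasStrictDerivAt arccotInvTanIntegral
    ((π / 2 - arctan u) * dslope invTanIntegral 0 u) u :=
  Continuous.integral_hasStrictDerivAt ((continuous_const.sub continuous_arctan).mul
    (continuous_dslope_of_differentiable differentiable_invTanIntegral 0)) 0 u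

lemma continuous_arccotInvTanIntegral : Continuous arccotInvTanIntegral :=
  continuous_iff_continuousAt.2 fun u =>
    (hasStrictDerivAt_arccotInvTanIntegral u).hasDerivAt.continuousAt

lemma arccotInvTanIntegral_zero : arccotInvTanIntegral 0 = 0 := intervalIntegral.integral_same

lemma hasDerivAt_arccotInvTanIntegral {u : ℝ} (hu : u ≠ 0) :
    HasDerivAt arccotInvTanIntegral ((π / 2 - arctan u) * invTanIntegral u / u) u := by
  rw [mul_div_assoc, ← dslope_zero_of_ne invTanIntegral_zero hu]
  exact (hasStrictDerivAt_arccotInvTanIntegral u).hasDerivAt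

lemma hasSum_arctan_div {v : ℝ} (hv0 : v ≠ 0) (hv1 : |v| < 1) :
    HasSum (fun k : ℕ => (-1) ^ k * v ^ (2 * k) / (2 * (k : ℝ) + 1)) (arctan v / v) := by
  refine ((hasSum_arctan hv1).div_const v).congr_fun fun k => ?_
  push_cast
  field_simp
  ring

lemma integral_mul_pow_div (c u : ℝ) (k : ℕ) :
    ∫ v in (0 : ℝ)..u, c * v ^ (2 * k) / (2 * (k : ℝ) + 1) =
      c * u ^ (2 * k + 1) / (2 * (k : ℝ) + 1) ^ 2 := by
  rw [intervalIntegral.integral_div, intervalIntegral.integral_const_mul, integral_pow]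
  push_cast
  rw [zero_pow (by positivity), sub_zero]
  field_simp

lemma summable_pow_div_odd_sq {u : ℝ} (hu0 : 0 ≤ u) (hu1 : u ≤ 1) :
    Summable fun k : ℕ => u ^ (2 * k + 1) / (2 * (k : ℝ) + 1) ^ 2 := by
  have hsq := (summable_nat_add_iff 1).2 (summable_one_div_nat_pow.2 one_lt_two)
  refine hsq.of_nonneg_of_le (fun k => by positivity) fun k => ?_
  push_cast
  gcongr
  · exact pow_le_one₀ hu0 hu1
  · linarith [k.cast_nonneg (α := ℝ)]

lemma hasSum_invTanIntegral {u : ℝ} (hu0 : 0 ≤ u) (hu1 : u ≤ 1) :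
    HasSum (fun k : ℕ => (-1) ^ k * u ^ (2 * k + 1) / (2 * (k : ℝ) + 1) ^ 2)
      (invTanIntegral u) := by
  have integral_Ioo {f : ℝ → ℝ} : ∫ v in Ioo 0 u, f v = ∫ v in (0 : ℝ)..u, f v := by
    rw [intervalIntegral.integral_of_le hu0, integral_Ioc_eq_integral_Ioo]
  have hint (k : ℕ) : IntegrableOn (fun v : ℝ => (-1) ^ k * v ^ (2 * k) / (2 * (k : ℝ) + 1))
      (Ioo 0 u) :=
    ((by fun_prop : Continuous _).intervalIntegrable 0 u).1.mono_set Ioo_subset_Ioc_self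
  have integral_norm (k : ℕ) : ∫ v in Ioo 0 u, ‖(-1) ^ k * v ^ (2 * k) / (2 * (k : ℝ) + 1)‖ =
      u ^ (2 * k + 1) / (2 * (k : ℝ) + 1) ^ 2 := by
    rw [← one_mul (u ^ _), ← integral_mul_pow_div, ← integral_Ioo]
    refine setIntegral_congr_fun measurableSet_Ioo fun v hv => ?_
    have hv0 : 0 ≤ v := hv.1.le
    simp only [norm_div, norm_mul, norm_pow, norm_neg, norm_one, one_pow]
    rw [norm_of_nonneg hv0, norm_of_nonneg (by positivity)]
  have hsum := hasSum_integral_of_summable_integral_norm hint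
    (by simpa only [integral_norm] using summable_pow_div_odd_sq hu0 hu1)
  simp only [integral_Ioo, integral_mul_pow_div] at hsum
  have integral_tsum : ∫ v in (0 : ℝ)..u, ∑' k : ℕ, (-1) ^ k * v ^ (2 * k) / (2 * (k : ℝ) + 1) =
      invTanIntegral u := by
    rw [invTanIntegral, ← integral_Ioo, ← integral_Ioo]
    refine setIntegral_congr_fun measurableSet_Ioo fun v hv => ?_
    have hv1 : |v| < 1 := abs_lt.2 ⟨by linarith [hv.1], hv.2.trans_le hu1⟩
    simp only [dslope_zero_of_ne arctan_zero hv.1.ne', (hasSum_arctan_div hv.1.ne' hv1).tsum_eq]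
  rwa [integral_tsum] at hsum

lemma invTanIntegral_one :
    invTanIntegral 1 = ∑' k : ℕ, (-1 : ℝ) ^ k / (2 * (k : ℝ) + 1) ^ 2 := by
  simpa only [one_pow, mul_one] using (hasSum_invTanIntegral zero_le_one le_rfl).tsum_eq.symm

lemma hasDerivAt_comp_inv {F : ℝ → ℝ} {c u : ℝ} (hu : u ≠ 0) (hF : HasDerivAt F (c / u⁻¹) u⁻¹) :
    HasDerivAt (fun v => F v⁻¹) (-(c / u)) u := by
  refine (hF.comp u (hasDerivAt_inv hu)).congr_deriv ?_
  field_simp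

lemma invTanIntegral_inv {u : ℝ} (hu : 0 < u) :
    invTanIntegral u⁻¹ = invTanIntegral u - π / 2 * log u := by
  have const := eq_of_hasDerivAt_zero_of_pos
    (f := fun v => invTanIntegral v⁻¹ - invTanIntegral v + π / 2 * log v) (fun v hv => by
      refine (((hasDerivAt_comp_inv hv.ne' (hasDerivAt_invTanIntegral (inv_ne_zero hv.ne'))).sub
        (hasDerivAt_invTanIntegral hv.ne')).add
        ((hasDerivAt_log hv.ne').const_mul (π / 2))).congr_deriv ?_
      rw [arctan_inv_of_pos hv]
      ring) hu one_pos
  simp only [inv_one, sub_self, log_one, mul_zero, add_zero] at const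
  linarith

lemma tendsto_invTanIntegral_mul_inv :
    Tendsto (fun u => invTanIntegral u * invTanIntegral u⁻¹) (𝓝[>] 0) (𝓝 0) := by
  have hlim : Tendsto (fun u => invTanIntegral u ^ 2 -
      π / 2 * (dslope invTanIntegral 0 u * (u * log u))) (𝓝 0) (𝓝 0) := by
    have hT := differentiable_invTanIntegral.continuous
    have hslope := continuous_dslope_of_differentiable differentiable_invTanIntegral 0
    have hcont : Continuous fun u => invTanIntegral u ^ 2 -
        π / 2 * (dslope invTanIntegral 0 u * (u * log u)) :=
      (hT.pow 2).sub (continuous_const.mul (hslope.mul continuous_mul_log))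
    simpa [invTanIntegral_zero] using hcont.tendsto 0
  refine (hlim.mono_left nhdsWithin_le_nhds).congr' ?_
  filter_upwards [self_mem_nhdsWithin] with u (hu : 0 < u)
  rw [invTanIntegral_inv hu, dslope_zero_of_ne invTanIntegral_zero hu.ne']
  field_simp

lemma arccotInvTanIntegral_inv {u : ℝ} (hu : 0 < u) :
    arccotInvTanIntegral u⁻¹ = 2 * arccotInvTanIntegral 1 + invTanIntegral 1 ^ 2 -
      arccotInvTanIntegral u - invTanIntegral u * invTanIntegral u⁻¹ := by
  have const := eq_of_hasDerivAt_zero_of_pos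
    (f := fun v => arccotInvTanIntegral v⁻¹ + arccotInvTanIntegral v +
      invTanIntegral v * invTanIntegral v⁻¹) (fun v hv => by
      have hv' := inv_ne_zero hv.ne'
      refine (((hasDerivAt_comp_inv hv.ne' (hasDerivAt_arccotInvTanIntegral hv')).add
        (hasDerivAt_arccotInvTanIntegral hv.ne')).add ((hasDerivAt_invTanIntegral hv.ne').mul
        (hasDerivAt_comp_inv hv.ne' (hasDerivAt_invTanIntegral hv')))).congr_deriv ?_
      rw [arctan_inv_of_pos hv]
      ring) hu one_pos
  simp only [inv_one] at const
  linarith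

lemma tendsto_arccotInvTanIntegral_atTop : Tendsto arccotInvTanIntegral atTop
    (𝓝 (2 * arccotInvTanIntegral 1 + invTanIntegral 1 ^ 2)) := by
  have hR : Tendsto arccotInvTanIntegral (𝓝[>] 0) (𝓝 0) := by
    have := continuous_arccotInvTanIntegral.tendsto 0
    rw [arccotInvTanIntegral_zero] at this
    exact this.mono_left nhdsWithin_le_nhds
  have hlim := (hR.const_sub (2 * arccotInvTanIntegral 1 + invTanIntegral 1 ^ 2)).sub
    tendsto_invTanIntegral_mul_inv
  rw [sub_zero, sub_zero] at hlim
  refine (hlim.comp tendsto_inv_atTop_nhdsGT_zero).congr' ?_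
  filter_upwards [eventually_gt_atTop 0] with v hv
  have reflect := arccotInvTanIntegral_inv (inv_pos.2 hv)
  rw [inv_inv] at reflect
  simpa only [Function.comp_apply, inv_inv] using reflect.symm

end InverseTangentIntegral

section WallisIntegral

/-- The reciprocals `4ⁿ / binom(2n, n)` of the Wallis numbers `(2n - 1)‼ / (2n)‼`. -/
noncomputable def wallisRatio (n : ℕ) : ℝ := 4 ^ n / n.centralBinom

/-- The general term of `∑ₖ 4ᵏ / binom(2k, k) · sin²ᵏ t / (2k + 1) = t / (sin t cos t)`, which is
the power series of `arcsin x / √(1 - x²)` at `x = sin t`, divided by `x`. -/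
noncomputable def wallisTerm (k : ℕ) (t : ℝ) : ℝ := wallisRatio k * sin t ^ (2 * k) / (2 * k + 1)

/-- The incomplete Wallis integral `∫₀ᵗ sin²ᵏ s ds`, scaled by `4ᵏ / binom(2k, k)` so that the
reduction formula for powers of the sine becomes the difference `wallisIntegral_sub_succ`. -/
noncomputable def wallisIntegral (k : ℕ) (t : ℝ) : ℝ :=
  ∫ s in (0 : ℝ)..t, wallisRatio k * sin s ^ (2 * k)

lemma wallisRatio_zero : wallisRatio 0 = 1 := by simp [wallisRatio]

lemma wallisRatio_pos (n : ℕ) : 0 < wallisRatio n :=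
  div_pos (by positivity) (Nat.cast_pos.2 n.centralBinom_pos)

lemma wallisRatio_succ (n : ℕ) :
    wallisRatio (n + 1) = wallisRatio n * (2 * n + 2) / (2 * n + 1) := by
  have hrec : ((n : ℝ) + 1) * (n + 1).centralBinom = 2 * (2 * n + 1) * n.centralBinom :=
    mod_cast n.succ_mul_centralBinom_succ
  have hpos : (0 : ℝ) < n.centralBinom := Nat.cast_pos.2 n.centralBinom_pos
  have hpos' : (0 : ℝ) < (n + 1).centralBinom := Nat.cast_pos.2 (n + 1).centralBinom_pos
  rw [wallisRatio, wallisRatio, div_mul_eq_mul_div, div_div,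
    div_eq_div_iff hpos'.ne' (by positivity), pow_succ]
  linear_combination (-4 ^ n * 2) * hrec

lemma wallisRatio_le (n : ℕ) : wallisRatio n ≤ 2 * n + 1 := by
  rw [wallisRatio, div_le_iff₀ (Nat.cast_pos.2 n.centralBinom_pos)]
  exact_mod_cast n.four_pow_le_two_mul_add_one_mul_central_binom

lemma wallisTerm_nonneg (k : ℕ) (t : ℝ) : 0 ≤ wallisTerm k t := by
  have hw := wallisRatio_pos k
  have hs : 0 ≤ sin t ^ (2 * k) := (even_two_mul k).pow_nonneg _
  unfold wallisTerm
  positivity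

lemma continuous_wallisTerm (k : ℕ) : Continuous (wallisTerm k) := by
  unfold wallisTerm
  fun_prop

lemma sin_pow_le_sin_pow {s t : ℝ} (hs : 0 ≤ s) (hst : s ≤ t) (ht : t ≤ π / 2) (n : ℕ) :
    sin s ^ n ≤ sin t ^ n :=
  pow_le_pow_left₀ (sin_nonneg_of_nonneg_of_le_pi hs (by linarith [pi_pos]))
    (sin_le_sin_of_le_of_le_pi_div_two (by linarith [pi_pos]) ht hst) n

lemma wallisTerm_le_wallisTerm {s t : ℝ} (hs : 0 ≤ s) (hst : s ≤ t) (ht : t ≤ π / 2) (k : ℕ) :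
    wallisTerm k s ≤ wallisTerm k t := by
  have hw := (wallisRatio_pos k).le
  have hsin := sin_pow_le_sin_pow hs hst ht (2 * k)
  unfold wallisTerm
  gcongr

lemma wallisIntegral_zero (t : ℝ) : wallisIntegral 0 t = t := by
  simp [wallisIntegral, wallisRatio_zero]

lemma continuous_wallisIntegral (k : ℕ) : Continuous (wallisIntegral k) :=
  intervalIntegral.continuous_primitive
    (fun _ _ => (by fun_prop : Continuous _).intervalIntegrable _ _) 0

lemma wallisIntegral_nonneg (k : ℕ) {t : ℝ} (ht : 0 ≤ t) : 0 ≤ wallisIntegral k t :=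
  intervalIntegral.integral_nonneg ht fun _ _ =>
    mul_nonneg (wallisRatio_pos k).le ((even_two_mul k).pow_nonneg _)

lemma wallisIntegral_sub_succ (k : ℕ) (t : ℝ) :
    wallisIntegral k t - wallisIntegral (k + 1) t = sin t * cos t * wallisTerm k t := by
  have hred : ∫ s in (0 : ℝ)..t, sin s ^ (2 * k + 2) = _ := integral_sin_pow (2 * k)
  simp only [wallisIntegral, wallisTerm, intervalIntegral.integral_const_mul, mul_add_one, hred,
    wallisRatio_succ, sin_zero, zero_pow (Nat.succ_ne_zero _), zero_mul, zero_sub]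
  push_cast
  field_simp
  ring

lemma antitone_wallisIntegral {t : ℝ} (ht0 : 0 ≤ t) (ht : t ≤ π / 2) :
    Antitone fun k => wallisIntegral k t := by
  refine antitone_nat_of_succ_le fun k => sub_nonneg.1 ?_
  rw [wallisIntegral_sub_succ]
  have hs := sin_nonneg_of_nonneg_of_le_pi ht0 (by linarith [pi_pos])
  have hc := cos_nonneg_of_neg_pi_div_two_le_of_le (by linarith [pi_pos]) ht
  exact mul_nonneg (mul_nonneg hs hc) (wallisTerm_nonneg k t)

lemma wallisIntegral_le (k : ℕ) {t : ℝ} (ht0 : 0 ≤ t) (ht : t ≤ π / 2) :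
    wallisIntegral k t ≤ (2 * k + 1) * sin t ^ (2 * k) * t := by
  have hmono : wallisIntegral k t ≤ ∫ _ in (0 : ℝ)..t, (2 * k + 1) * sin t ^ (2 * k) := by
    refine intervalIntegral.integral_mono_on ht0
      ((by fun_prop : Continuous _).intervalIntegrable _ _) intervalIntegrable_const fun s hs => ?_
    exact mul_le_mul (wallisRatio_le k) (sin_pow_le_sin_pow hs.1 hs.2 ht _)
      ((even_two_mul k).pow_nonneg _) (by positivity)
  rwa [intervalIntegral.integral_const, sub_zero, smul_eq_mul, mul_comm t] at hmono

lemma tendsto_wallisIntegral {t : ℝ} (ht0 : 0 ≤ t) (ht : t < π / 2) :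
    Tendsto (fun k => wallisIntegral k t) atTop (𝓝 0) := by
  have hs0 := sin_nonneg_of_nonneg_of_le_pi ht0 (by linarith [pi_pos])
  have hs1 : sin t < 1 := by
    rw [← sin_pi_div_two]
    exact sin_lt_sin_of_lt_of_le_pi_div_two (by linarith [pi_pos]) le_rfl ht
  have hr0 : 0 ≤ sin t ^ 2 := sq_nonneg _
  have hr1 : sin t ^ 2 < 1 := pow_lt_one₀ hs0 hs1 two_ne_zero
  have hlim : Tendsto (fun k : ℕ => (2 * (k * (sin t ^ 2) ^ k) + (sin t ^ 2) ^ k) * t) atTop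
      (𝓝 0) := by
    simpa using (((tendsto_self_mul_const_pow_of_lt_one hr0 hr1).const_mul 2).add
      (tendsto_pow_atTop_nhds_zero_of_lt_one hr0 hr1)).mul_const t
  refine squeeze_zero (fun k => wallisIntegral_nonneg k ht0) (fun k => ?_) hlim
  refine (wallisIntegral_le k ht0 ht.le).trans_eq ?_
  rw [pow_mul]
  ring

lemma hasSum_wallisTerm {t : ℝ} (ht : t ∈ Ioo 0 (π / 2)) (k : ℕ) :
    HasSum (fun b => wallisTerm (k + b) t) (wallisIntegral k t / (sin t * cos t)) := by
  have hne : sin t * cos t ≠ 0 := (mul_pos (sin_pos_of_mem_Ioo_zero_pi_div_two ht)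
    (cos_pos_of_mem_Ioo_zero_pi_div_two ht)).ne'
  have telescope := hasSum_sub_succ_of_antitone (antitone_wallisIntegral ht.1.le ht.2.le)
    (tendsto_wallisIntegral ht.1.le ht.2) k
  simpa only [wallisIntegral_sub_succ, sub_zero, mul_div_cancel_left₀ _ hne] using
    telescope.div_const (sin t * cos t)

lemma hasSum_wallisTerm_zero {t : ℝ} (ht : t ∈ Ioo 0 (π / 2)) :
    HasSum (fun j => wallisTerm j t) (t / (sin t * cos t)) := by
  simpa only [zero_add, wallisIntegral_zero] using hasSum_wallisTerm ht 0

lemma integral_wallisIntegral (k : ℕ) (a : ℝ) :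
    ∫ t in (0 : ℝ)..a, wallisIntegral k t =
      ∫ t in (0 : ℝ)..a, (a - t) * (wallisRatio k * sin t ^ (2 * k)) :=
  integral_integral_eq_integral_sub_mul (by fun_prop) 0 a

lemma tendsto_integral_wallisIntegral :
    Tendsto (fun k => ∫ t in (0 : ℝ)..π / 2, wallisIntegral k t) atTop (𝓝 0) := by
  have hlim := intervalIntegral.tendsto_integral_filter_of_dominated_convergence
    (F := wallisIntegral) (f := fun _ => 0) (l := atTop) (μ := volume) (a := 0) (b := π / 2) id
    (.of_forall fun k => (continuous_wallisIntegral k).aestronglyMeasurable)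
    (.of_forall fun k => .of_forall fun t ht => ?_) (continuous_id.intervalIntegrable _ _) ?_
  · simpa only [intervalIntegral.integral_zero] using hlim
  · rw [uIoc_of_le pi_div_two_pos.le] at ht
    rw [norm_of_nonneg (wallisIntegral_nonneg k ht.1.le), id]
    exact (antitone_wallisIntegral ht.1.le ht.2 k.zero_le).trans_eq (wallisIntegral_zero t)
  · filter_upwards [Measure.ae_ne volume (π / 2)] with t hne ht
    rw [uIoc_of_le pi_div_two_pos.le] at ht
    exact tendsto_wallisIntegral ht.1.le (lt_of_le_of_ne ht.2 hne)

lemma integral_wallisIntegral_sub_succ (k : ℕ) :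
    (∫ t in (0 : ℝ)..π / 2, wallisIntegral k t) - ∫ t in (0 : ℝ)..π / 2, wallisIntegral (k + 1) t =
      wallisRatio (k + 1) / (2 * (k + 1 : ℕ)) ^ 2 := by
  rw [← intervalIntegral.integral_sub ((continuous_wallisIntegral _).intervalIntegrable _ _)
    ((continuous_wallisIntegral _).intervalIntegrable _ _)]
  have integrand_eq (t : ℝ) : wallisIntegral k t - wallisIntegral (k + 1) t =
      wallisRatio k / (2 * k + 1) * (sin t ^ (2 * k + 1) * cos t) := by
    rw [wallisIntegral_sub_succ, wallisTerm]
    ring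
  simp only [integrand_eq, intervalIntegral.integral_const_mul, integral_sin_pow_mul_cos,
    sin_pi_div_two, sin_zero, one_pow, zero_pow (Nat.succ_ne_zero _), wallisRatio_succ]
  push_cast
  field_simp
  ring

lemma hasSum_wallisRatio_div_sq (m : ℕ) :
    HasSum (fun c => wallisRatio (m + c + 1) / ((m + c + 1 : ℕ) : ℝ) ^ 2)
      (4 * ∫ t in (0 : ℝ)..π / 2, wallisIntegral m t) := by
  have antitone_integral : Antitone fun k => ∫ t in (0 : ℝ)..π / 2, wallisIntegral k t := by
    refine antitone_nat_of_succ_le fun k => sub_nonneg.1 ?_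
    rw [integral_wallisIntegral_sub_succ]
    exact div_nonneg (wallisRatio_pos _).le (sq_nonneg _)
  have telescope :=
    (hasSum_sub_succ_of_antitone antitone_integral tendsto_integral_wallisIntegral m).mul_left 4
  simp only [integral_wallisIntegral_sub_succ, sub_zero] at telescope
  refine telescope.congr_fun fun c => ?_
  field_simp
  norm_num

lemma hasSum_integral_mul_wallisTerm {t : ℝ} (ht : t ∈ Ioo 0 (π / 2)) {w : ℝ → ℝ}
    (hw : Continuous w) :
    HasSum (fun j => ∫ s in (0 : ℝ)..t, w s * wallisTerm j s)
      (∫ s in (0 : ℝ)..t, w s * (s / (sin s * cos s))) := by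
  obtain ⟨C, hC⟩ := isCompact_Icc.exists_bound_of_continuousOn (s := Icc 0 t) hw.continuousOn
  refine intervalIntegral.hasSum_integral_of_dominated_convergence
    (fun j _ => C * wallisTerm j t)
    (fun j => (hw.mul (continuous_wallisTerm j)).aestronglyMeasurable)
    (fun j => .of_forall fun s hs => ?_)
    (.of_forall fun _ _ => (hasSum_wallisTerm_zero ht).summable.mul_left C)
    intervalIntegrable_const (.of_forall fun s hs => ?_)
  · rw [uIoc_of_le ht.1.le] at hs
    rw [norm_mul, norm_of_nonneg (wallisTerm_nonneg j s)]
    exact mul_le_mul (hC s ⟨hs.1.le, hs.2⟩) (wallisTerm_le_wallisTerm hs.1.le hs.2 ht.2.le j)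
      (wallisTerm_nonneg j s) ((norm_nonneg _).trans (hC s ⟨hs.1.le, hs.2⟩))
  · rw [uIoc_of_le ht.1.le] at hs
    exact (hasSum_wallisTerm_zero ⟨hs.1, hs.2.trans_lt ht.2⟩).mul_left (w s)

end WallisIntegral

section WallisSeries

lemma hasDerivAt_invTanIntegral_tan {t : ℝ} (ht : t ∈ Ioo 0 (π / 2)) :
    HasDerivAt (fun s => invTanIntegral (tan s)) (t / (sin t * cos t)) t := by
  refine hasDerivAt_comp_tan (sin_pos_of_mem_Ioo_zero_pi_div_two ht).ne'
    (cos_pos_of_mem_Ioo_zero_pi_div_two ht).ne' ?_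
  have hderiv := hasDerivAt_invTanIntegral (tan_pos_of_pos_of_lt_pi_div_two ht.1 ht.2).ne'
  rwa [arctan_tan (by linarith [ht.1, pi_pos]) ht.2] at hderiv

lemma hasDerivAt_invTanIntegral_tan_half {t : ℝ} (ht : t ∈ Ioo 0 (π / 2)) :
    HasDerivAt (fun s => invTanIntegral (tan (s / 2))) (t / 2 / sin t) t :=
  hasDerivAt_comp_half (hasDerivAt_invTanIntegral_tan (half_mem_Ioo_zero ht))

lemma integral_div_sin_mul_cos {t : ℝ} (ht : t ∈ Ioo 0 (π / 2)) :
    ∫ s in (0 : ℝ)..t, s / (sin s * cos s) = invTanIntegral (tan t) := by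
  have hsub : Ioo 0 t ⊆ Ioo 0 (π / 2) := Ioo_subset_Ioo_right ht.2.le
  have hT := differentiable_invTanIntegral.continuous
  have hT0 := continuousAt_comp_tan hT (t := 0) (by simp)
  have hTt := continuousAt_comp_tan hT (cos_pos_of_mem_Ioo_zero_pi_div_two ht).ne'
  have hnonneg (s) (hs : s ∈ Ioo 0 t) : 0 ≤ s / (sin s * cos s) :=
    div_nonneg hs.1.le (mul_pos (sin_pos_of_mem_Ioo_zero_pi_div_two (hsub hs))
      (cos_pos_of_mem_Ioo_zero_pi_div_two (hsub hs))).le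
  simpa only [tan_zero, invTanIntegral_zero, sub_zero] using
    integral_eq_sub_of_hasDerivAt_of_nonneg_of_tendsto ht.1
      (fun s hs => hasDerivAt_invTanIntegral_tan (hsub hs)) hnonneg
      (hT0.tendsto.mono_left nhdsWithin_le_nhds) (hTt.tendsto.mono_left nhdsWithin_le_nhds)

lemma integral_half_div_sin {t : ℝ} (ht : t ∈ Ioo 0 (π / 2)) :
    ∫ s in (0 : ℝ)..t, s / 2 / sin s = invTanIntegral (tan (t / 2)) := by
  have hsub : Ioo 0 t ⊆ Ioo 0 (π / 2) := Ioo_subset_Ioo_right ht.2.le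
  have hT := differentiable_invTanIntegral.continuous
  have hT0 := continuousAt_comp_tan_half hT (t := 0) (by simp)
  have hTt := continuousAt_comp_tan_half hT
    (cos_pos_of_mem_Ioo_zero_pi_div_two (half_mem_Ioo_zero ht)).ne'
  have hnonneg (s) (hs : s ∈ Ioo 0 t) : 0 ≤ s / 2 / sin s :=
    div_nonneg (half_pos hs.1).le (sin_pos_of_mem_Ioo_zero_pi_div_two (hsub hs)).le
  simpa only [zero_div, tan_zero, invTanIntegral_zero, sub_zero] using
    integral_eq_sub_of_hasDerivAt_of_nonneg_of_tendsto ht.1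
      (fun s hs => hasDerivAt_invTanIntegral_tan_half (hsub hs)) hnonneg
      (hT0.tendsto.mono_left nhdsWithin_le_nhds) (hTt.tendsto.mono_left nhdsWithin_le_nhds)

lemma integral_cos_mul_wallisTerm (j : ℕ) (t : ℝ) :
    ∫ s in (0 : ℝ)..t, cos s * wallisTerm j s = wallisTerm j t * sin t / (2 * j + 1) := by
  have integrand_eq (s : ℝ) : cos s * wallisTerm j s =
      wallisRatio j / (2 * j + 1) * (sin s ^ (2 * j) * cos s) := by
    rw [wallisTerm]
    ring
  simp only [integrand_eq, intervalIntegral.integral_const_mul, integral_sin_pow_mul_cos,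
    sin_zero, zero_pow (Nat.succ_ne_zero _)]
  rw [wallisTerm]
  push_cast
  ring

lemma hasSum_wallisIntegral_div {t : ℝ} (ht : t ∈ Ioo 0 (π / 2)) :
    HasSum (fun j => wallisIntegral j t / (2 * j + 1)) (invTanIntegral (tan t)) := by
  have hsum := hasSum_integral_mul_wallisTerm ht (w := fun _ => 1) continuous_const
  simp only [one_mul, integral_div_sin_mul_cos ht, wallisTerm,
    intervalIntegral.integral_div] at hsum
  exact hsum

lemma hasSum_wallisTerm_mul_sin_div {t : ℝ} (ht : t ∈ Ioo 0 (π / 2)) :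
    HasSum (fun j => wallisTerm j t * sin t / (2 * j + 1)) (2 * invTanIntegral (tan (t / 2))) := by
  have integral_weight : ∫ s in (0 : ℝ)..t, cos s * (s / (sin s * cos s)) =
      2 * invTanIntegral (tan (t / 2)) := by
    rw [← integral_half_div_sin ht, ← intervalIntegral.integral_const_mul]
    refine intervalIntegral.integral_congr fun s hs => ?_
    rw [uIcc_of_le ht.1.le] at hs
    have hc : cos s ≠ 0 :=
      (cos_pos_of_mem_Ioo ⟨by linarith [hs.1, pi_pos], hs.2.trans_lt ht.2⟩).ne'
    field_simp
  have hsum := hasSum_integral_mul_wallisTerm ht continuous_cos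
  simpa only [integral_weight, integral_cos_mul_wallisTerm] using hsum

lemma hasSum_wallisIntegral_succ_div {t : ℝ} (ht : t ∈ Ioo 0 (π / 2)) :
    HasSum (fun a : ℕ => wallisIntegral (a + 1) t / (2 * a + 1))
      (invTanIntegral (tan t) - 2 * cos t * invTanIntegral (tan (t / 2))) := by
  have hsum := (hasSum_wallisIntegral_div ht).sub
    ((hasSum_wallisTerm_mul_sin_div ht).mul_left (cos t))
  rw [← mul_assoc, mul_comm (cos t)] at hsum
  refine hsum.congr_fun fun a => ?_
  rw [← sub_sub_self (wallisIntegral a t) (wallisIntegral (a + 1) t), wallisIntegral_sub_succ]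
  ring

end WallisSeries

section Kernel

/-- The function on `(0, π / 2)` whose integral is the triple sum, obtained by summing under the
integral sign over the two smaller indices. -/
noncomputable def tripleSumKernel (t : ℝ) : ℝ :=
  4 * (π / 2 - t) / (sin t * cos t) *
    (invTanIntegral (tan t) - 2 * cos t * invTanIntegral (tan (t / 2)))

/-- A primitive of `tripleSumKernel` in closed form. -/
noncomputable def tripleSumPrimitive (t : ℝ) : ℝ :=
  4 * arccotInvTanIntegral (tan t) - 8 * arccotInvTanIntegral (tan (t / 2)) +
    4 * invTanIntegral (tan (t / 2)) ^ 2

lemma tripleSumKernel_nonneg {t : ℝ} (ht : t ∈ Ioo 0 (π / 2)) : 0 ≤ tripleSumKernel t := by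
  have hs := sin_pos_of_mem_Ioo_zero_pi_div_two ht
  have hc := cos_pos_of_mem_Ioo_zero_pi_div_two ht
  have ht' : 0 ≤ π / 2 - t := sub_nonneg.2 ht.2.le
  have hsum_nonneg := (hasSum_wallisIntegral_succ_div ht).nonneg fun a =>
    div_nonneg (wallisIntegral_nonneg (a + 1) ht.1.le) (by positivity)
  exact mul_nonneg (by positivity) hsum_nonneg

lemma hasDerivAt_arccotInvTanIntegral_tan {t : ℝ} (ht : t ∈ Ioo 0 (π / 2)) :
    HasDerivAt (fun s => arccotInvTanIntegral (tan s))
      ((π / 2 - t) * invTanIntegral (tan t) / (sin t * cos t)) t := by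
  refine hasDerivAt_comp_tan (sin_pos_of_mem_Ioo_zero_pi_div_two ht).ne'
    (cos_pos_of_mem_Ioo_zero_pi_div_two ht).ne' ?_
  have hderiv := hasDerivAt_arccotInvTanIntegral (tan_pos_of_pos_of_lt_pi_div_two ht.1 ht.2).ne'
  rwa [arctan_tan (by linarith [ht.1, pi_pos]) ht.2] at hderiv

lemma hasDerivAt_arccotInvTanIntegral_tan_half {t : ℝ} (ht : t ∈ Ioo 0 (π / 2)) :
    HasDerivAt (fun s => arccotInvTanIntegral (tan (s / 2)))
      ((π / 2 - t / 2) * invTanIntegral (tan (t / 2)) / sin t) t :=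
  hasDerivAt_comp_half (hasDerivAt_arccotInvTanIntegral_tan (half_mem_Ioo_zero ht))

lemma hasDerivAt_tripleSumPrimitive {t : ℝ} (ht : t ∈ Ioo 0 (π / 2)) :
    HasDerivAt tripleSumPrimitive (tripleSumKernel t) t := by
  refine ((((hasDerivAt_arccotInvTanIntegral_tan ht).const_mul 4).sub
    ((hasDerivAt_arccotInvTanIntegral_tan_half ht).const_mul 8)).add
    (((hasDerivAt_invTanIntegral_tan_half ht).pow 2).const_mul 4)).congr_deriv ?_
  have hs := (sin_pos_of_mem_Ioo_zero_pi_div_two ht).ne'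
  have hc := (cos_pos_of_mem_Ioo_zero_pi_div_two ht).ne'
  rw [tripleSumKernel]
  push_cast
  field_simp
  ring

lemma tendsto_tripleSumPrimitive_zero : Tendsto tripleSumPrimitive (𝓝[>] 0) (𝓝 0) := by
  have hR := continuousAt_comp_tan continuous_arccotInvTanIntegral (t := 0) (by simp)
  have hR2 := continuousAt_comp_tan_half continuous_arccotInvTanIntegral (t := 0) (by simp)
  have hT2 := continuousAt_comp_tan_half differentiable_invTanIntegral.continuous (t := 0)
    (by simp)
  have hcont : ContinuousAt tripleSumPrimitive 0 :=
    ((continuousAt_const.mul hR).sub (continuousAt_const.mul hR2)).add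
      (continuousAt_const.mul (hT2.pow 2))
  have hzero : tripleSumPrimitive 0 = 0 := by
    simp [tripleSumPrimitive, arccotInvTanIntegral_zero, invTanIntegral_zero]
  simpa only [hzero] using hcont.tendsto.mono_left nhdsWithin_le_nhds

lemma tendsto_tripleSumPrimitive_pi_div_two :
    Tendsto tripleSumPrimitive (𝓝[<] (π / 2)) (𝓝 (8 * invTanIntegral 1 ^ 2)) := by
  have hcos : cos (π / 2 / 2) ≠ 0 :=
    (cos_pos_of_mem_Ioo ⟨by linarith [pi_pos], by linarith [pi_pos]⟩).ne'
  have htan : tan (π / 2 / 2) = 1 := by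
    rw [div_div, show (2 : ℝ) * 2 = 4 by norm_num, tan_pi_div_four]
  have hR := tendsto_arccotInvTanIntegral_atTop.comp tendsto_tan_pi_div_two
  have hR2 := (continuousAt_comp_tan_half continuous_arccotInvTanIntegral hcos).tendsto
  have hT2 := (continuousAt_comp_tan_half differentiable_invTanIntegral.continuous hcos).tendsto
  rw [htan] at hR2 hT2
  have hlim := ((hR.const_mul 4).sub ((hR2.mono_left nhdsWithin_le_nhds).const_mul 8)).add
    (((hT2.mono_left nhdsWithin_le_nhds).pow 2).const_mul 4)
  have hvalue : 4 * (2 * arccotInvTanIntegral 1 + invTanIntegral 1 ^ 2) -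
      8 * arccotInvTanIntegral 1 + 4 * invTanIntegral 1 ^ 2 = 8 * invTanIntegral 1 ^ 2 := by
    ring
  rwa [hvalue] at hlim

lemma lintegral_tripleSumKernel :
    ∫⁻ t in Ioo 0 (π / 2), ENNReal.ofReal (tripleSumKernel t) =
      ENNReal.ofReal (8 * invTanIntegral 1 ^ 2) := by
  have hderiv (t) (ht : t ∈ Ioo 0 (π / 2)) := hasDerivAt_tripleSumPrimitive ht
  have hnonneg (t) (ht : t ∈ Ioo 0 (π / 2)) := tripleSumKernel_nonneg ht
  rw [lintegral_Ioo_ofReal_eq_ofReal_integral pi_div_two_pos.le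
      (intervalIntegrable_of_hasDerivAt_of_nonneg_of_tendsto pi_div_two_pos hderiv hnonneg
        tendsto_tripleSumPrimitive_zero tendsto_tripleSumPrimitive_pi_div_two) hnonneg,
    integral_eq_sub_of_hasDerivAt_of_nonneg_of_tendsto pi_div_two_pos hderiv hnonneg
      tendsto_tripleSumPrimitive_zero tendsto_tripleSumPrimitive_pi_div_two, sub_zero]

end Kernel

section TripleSum

/-- Reparametrization of the index set `n₁ > n₂ ≥ n₃ ≥ 1` by its successive gaps
`a = n₃ - 1`, `b = n₂ - n₃`, `c = n₁ - n₂ - 1`. -/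
def gapEquiv :
    ℕ × ℕ × ℕ ≃ {p : ℕ × ℕ × ℕ // p.2.2 ≤ p.2.1 ∧ p.2.1 < p.1 ∧ 1 ≤ p.2.2} where
  toFun q := ⟨(q.1 + 1 + q.2.1 + q.2.2 + 1, q.1 + 1 + q.2.1, q.1 + 1), by grind⟩
  invFun p := (p.1.2.2 - 1, p.1.2.1 - p.1.2.2, p.1.1 - p.1.2.1 - 1)
  left_inv q := by grind
  right_inv p := by grind

/-- The summand of the triple series at `n₁ = a + b + c + 2`, `n₂ = a + b + 1`, `n₃ = a + 1`. -/
noncomputable def tripleTerm (a b c : ℕ) : ℝ :=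
  wallisRatio (a + 1 + b + c + 1) / ((a + 1 + b + c + 1 : ℕ) : ℝ) ^ 2 /
    ((2 * (a + 1 + b : ℕ) + 1) * (2 * a + 1))

/-- The integrand on `(0, π / 2)` representing the sum of `tripleTerm a b c` over `c`. -/
noncomputable def tripleIntegrand (a b : ℕ) (t : ℝ) : ℝ :=
  4 * (π / 2 - t) / (2 * a + 1) * wallisTerm (a + 1 + b) t

lemma summand_gapEquiv_eq_tripleTerm (q : ℕ × ℕ × ℕ) :
    (4 : ℝ) ^ (gapEquiv q).1.1 / ((Nat.choose (2 * (gapEquiv q).1.1) (gapEquiv q).1.1 : ℝ) *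
      ((gapEquiv q).1.1 : ℝ) ^ 2 * (2 * ((gapEquiv q).1.2.1 : ℝ) + 1) *
      (2 * ((gapEquiv q).1.2.2 : ℝ) - 1)) = tripleTerm q.1 q.2.1 q.2.2 := by
  have hodd : 2 * ((q.1 + 1 : ℕ) : ℝ) - 1 = 2 * q.1 + 1 := by
    push_cast
    ring
  simp only [gapEquiv, Equiv.coe_fn_mk, tripleTerm, wallisRatio, Nat.centralBinom_eq_two_mul_choose,
    div_div, hodd, mul_assoc]

lemma tripleTerm_nonneg (a b c : ℕ) : 0 ≤ tripleTerm a b c := by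
  have hw := wallisRatio_pos (a + 1 + b + c + 1)
  unfold tripleTerm
  positivity

lemma tripleIntegrand_nonneg (a b : ℕ) {t : ℝ} (ht : t ≤ π / 2) : 0 ≤ tripleIntegrand a b t := by
  have : 0 ≤ π / 2 - t := sub_nonneg.2 ht
  exact mul_nonneg (by positivity) (wallisTerm_nonneg _ t)

lemma continuous_tripleIntegrand (a b : ℕ) : Continuous (tripleIntegrand a b) := by
  have hterm := continuous_wallisTerm (a + 1 + b)
  unfold tripleIntegrand
  fun_prop

lemma hasSum_tripleTerm (a b : ℕ) :
    HasSum (tripleTerm a b) (∫ t in (0 : ℝ)..π / 2, tripleIntegrand a b t) := by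
  have integral_eq : ∫ t in (0 : ℝ)..π / 2, tripleIntegrand a b t =
      (4 * ∫ t in (0 : ℝ)..π / 2, wallisIntegral (a + 1 + b) t) /
        ((2 * (a + 1 + b : ℕ) + 1) * (2 * a + 1)) := by
    rw [integral_wallisIntegral, ← intervalIntegral.integral_const_mul,
      ← intervalIntegral.integral_div]
    refine intervalIntegral.integral_congr fun t _ => ?_
    simp only [tripleIntegrand, wallisTerm]
    field_simp
  rw [integral_eq]
  exact (hasSum_wallisRatio_div_sq (a + 1 + b)).div_const _

lemma hasSum_tripleIntegrand (a : ℕ) {t : ℝ} (ht : t ∈ Ioo 0 (π / 2)) :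
    HasSum (fun b => tripleIntegrand a b t)
      (4 * (π / 2 - t) / (sin t * cos t) * (wallisIntegral (a + 1) t / (2 * a + 1))) := by
  have hsum := (hasSum_wallisTerm ht (a + 1)).mul_left (4 * (π / 2 - t) / (2 * a + 1))
  rwa [div_mul_div_comm, mul_comm (2 * (a : ℝ) + 1), ← div_mul_div_comm] at hsum

lemma tsum_ofReal_tripleTerm (a b : ℕ) :
    ∑' c, ENNReal.ofReal (tripleTerm a b c) =
      ∫⁻ t in Ioo 0 (π / 2), ENNReal.ofReal (tripleIntegrand a b t) := by
  rw [tsum_ofReal_eq_of_hasSum (hasSum_tripleTerm a b) (tripleTerm_nonneg a b),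
    lintegral_Ioo_ofReal_eq_ofReal_integral pi_div_two_pos.le
      ((continuous_tripleIntegrand a b).intervalIntegrable _ _)
      fun t ht => tripleIntegrand_nonneg a b ht.2.le]

lemma tsum_tsum_ofReal_tripleIntegrand {t : ℝ} (ht : t ∈ Ioo 0 (π / 2)) :
    ∑' a, ∑' b, ENNReal.ofReal (tripleIntegrand a b t) = ENNReal.ofReal (tripleSumKernel t) := by
  have hnonneg (a b : ℕ) := tripleIntegrand_nonneg a b ht.2.le
  simp only [tsum_ofReal_eq_of_hasSum (hasSum_tripleIntegrand _ ht) (hnonneg _)]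
  exact tsum_ofReal_eq_of_hasSum ((hasSum_wallisIntegral_succ_div ht).mul_left _)
    fun a => (hasSum_tripleIntegrand a ht).nonneg (hnonneg a)

lemma tsum_tripleTerm :
    ∑' q : ℕ × ℕ × ℕ, tripleTerm q.1 q.2.1 q.2.2 = 8 * invTanIntegral 1 ^ 2 := by
  refine tsum_eq_of_tsum_ofReal_eq (fun q => tripleTerm_nonneg _ _ _) (by positivity) ?_
  have hmeas (a b : ℕ) : Measurable fun t => ENNReal.ofReal (tripleIntegrand a b t) :=
    (continuous_tripleIntegrand a b).measurable.ennreal_ofReal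
  calc ∑' q : ℕ × ℕ × ℕ, ENNReal.ofReal (tripleTerm q.1 q.2.1 q.2.2)
      = ∑' a, ∑' b, ∑' c, ENNReal.ofReal (tripleTerm a b c) := by
        simp only [ENNReal.tsum_prod']
    _ = ∑' a, ∑' b, ∫⁻ t in Ioo 0 (π / 2), ENNReal.ofReal (tripleIntegrand a b t) := by
        simp only [tsum_ofReal_tripleTerm]
    _ = ∑' a, ∫⁻ t in Ioo 0 (π / 2), ∑' b, ENNReal.ofReal (tripleIntegrand a b t) :=
        tsum_congr fun a => (lintegral_tsum fun b => (hmeas a b).aemeasurable).symm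
    _ = ∫⁻ t in Ioo 0 (π / 2), ∑' a, ∑' b, ENNReal.ofReal (tripleIntegrand a b t) :=
        (lintegral_tsum fun a => (Measurable.tsum (hmeas a)).aemeasurable).symm
    _ = ∫⁻ t in Ioo 0 (π / 2), ENNReal.ofReal (tripleSumKernel t) :=
        setLIntegral_congr_fun measurableSet_Ioo fun t ht => tsum_tsum_ofReal_tripleIntegrand ht
    _ = ENNReal.ofReal (8 * invTanIntegral 1 ^ 2) := lintegral_tripleSumKernel

end TripleSum

/-- `∑_{n₁ > n₂ ≥ n₃ ≥ 1} 4^{n₁}/(binom(2n₁,n₁) n₁² (2n₂+1)(2n₃−1)) = 8G²`. -/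
theorem stmt17 :
    (∑' p : {p : ℕ × ℕ × ℕ // p.2.2 ≤ p.2.1 ∧ p.2.1 < p.1 ∧ 1 ≤ p.2.2},
      (4 : ℝ) ^ p.1.1 /
        ((Nat.choose (2 * p.1.1) p.1.1 : ℝ) * (p.1.1 : ℝ) ^ 2 *
          (2 * (p.1.2.1 : ℝ) + 1) * (2 * (p.1.2.2 : ℝ) - 1))) =
    8 * (∑' k : ℕ, (-1 : ℝ) ^ k / (2 * (k : ℝ) + 1) ^ 2) ^ 2 := by
  rw [← gapEquiv.tsum_eq, tsum_congr summand_gapEquiv_eq_tripleTerm, tsum_tripleTerm,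
    invTanIntegral_one]
end

section
/- We have ∑_{n₁ ≥ n₂ ≥ 1} 3^{n₁} / (binom(2n₁, n₁) · (2n₁+1) · (2n₂)²) = 2π³ / (81 √3), where the double sum is over integers n₁ ≥ n₂ ≥ 1. -/
open Real

/-!
The numbers `cₙ = 4ⁿ / ((2n+1) binom(2n,n))` satisfy `(2n+3) cₙ₊₁ = (2n+2) cₙ`. Hence, for bounded
weights `K`, the series `S_K(x) = ∑ cₙ Kₙ x^(2n+1)` satisfies
`(1 - x²) S_K' - x S_K = K₀ + ∑ (2n+2) cₙ (Kₙ₊₁ - Kₙ) x^(2n+2)`, and with `x = sin θ` the left-hand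
side is the derivative of `cos θ · S_K(sin θ)`. For `K = 1` this gives `cos θ · S₁(sin θ) = θ`.
Replacing `Kₙ` by `∑_{j<n} Kⱼ / (2j+2)²` amounts to integrating twice in `θ`, so that
`cos θ · S(sin θ)` runs through `θ, θ³/3!, θ⁵/5!, …`. The double sum is the second of these series,
at `θ = π/3`.
-/

section PowerSeries

variable {ι 𝕜 : Type*} [RCLike 𝕜] {a : ι → 𝕜} {e : ι → ℕ} {M : ℝ} {x : 𝕜}

lemma summable_mul_add_one_mul_pow (M : ℝ) (he : e.Injective) {r : ℝ} (hr : ‖r‖ < 1) :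
    Summable fun i => M * (e i + 1) * r ^ e i := by
  have hgeom : Summable fun n : ℕ => ((n : ℝ) + 1) * r ^ n := by
    simpa [add_mul] using (summable_pow_mul_geometric_of_norm_lt_one 1 hr).add
      (summable_geometric_of_norm_lt_one hr)
  simpa only [Function.comp_def, mul_assoc] using (hgeom.comp_injective he).mul_left M

lemma norm_mul_add_one_mul_pow_le (ha : ∀ i, ‖a i‖ ≤ M) {r : ℝ} (hx : ‖x‖ ≤ r) (i : ι) :
    ‖a i * (e i + 1) * x ^ e i‖ ≤ M * (e i + 1) * r ^ e i := by
  have hM : 0 ≤ M := (norm_nonneg _).trans (ha i)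
  have he : ‖(e i + 1 : 𝕜)‖ = e i + 1 := by
    exact_mod_cast RCLike.norm_natCast (K := 𝕜) (e i + 1)
  rw [norm_mul, norm_mul, norm_pow, he]
  gcongr
  exact ha i

lemma summable_mul_add_one_mul_pow_of_bounded (ha : ∀ i, ‖a i‖ ≤ M) (he : e.Injective)
    (hx : ‖x‖ < 1) : Summable fun i => a i * (e i + 1) * x ^ e i :=
  .of_norm_bounded (summable_mul_add_one_mul_pow M he (by rwa [norm_norm]))
    (norm_mul_add_one_mul_pow_le ha le_rfl)

lemma summable_mul_pow_of_bounded (ha : ∀ i, ‖a i‖ ≤ M) (he : e.Injective) (hx : ‖x‖ < 1) :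
    Summable fun i => a i * x ^ e i := by
  refine .of_norm_bounded
    (((summable_geometric_of_lt_one (norm_nonneg x) hx).comp_injective he).mul_left M) fun i => ?_
  rw [norm_mul, norm_pow]
  exact mul_le_mul_of_nonneg_right (ha i) (by positivity)

lemma hasDerivAt_tsum_mul_pow_add_one (ha : ∀ i, ‖a i‖ ≤ M) (he : e.Injective) (hx : ‖x‖ < 1) :
    HasDerivAt (fun y => ∑' i, a i * y ^ (e i + 1)) (∑' i, a i * (e i + 1) * x ^ e i) x := by
  obtain ⟨r, hxr, hr⟩ := exists_between hx
  have hr' : ‖r‖ < 1 := by rwa [Real.norm_of_nonneg ((norm_nonneg x).trans hxr.le)]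
  refine hasDerivAt_tsum_of_isPreconnected (g := fun i y => a i * y ^ (e i + 1))
    (g' := fun i y => a i * (e i + 1) * y ^ e i) (t := Metric.ball 0 r) (y₀ := 0)
    (summable_mul_add_one_mul_pow M he hr')
    Metric.isOpen_ball (Metric.isPreconnected_ball) (fun i y _ => ?_) (fun i y hy => ?_) ?_ ?_ ?_
  · simpa [mul_assoc] using (hasDerivAt_pow (e i + 1) y).const_mul (a i)
  · exact norm_mul_add_one_mul_pow_le ha (mem_ball_zero_iff.1 hy).le i
  · exact Metric.mem_ball_self ((norm_nonneg x).trans_lt hxr)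
  · simp
  · exact mem_ball_zero_iff.2 hxr

end PowerSeries

/-- The coefficient of `x ^ (2 * n + 1)` in the power series of `arcsin x / √(1 - x ^ 2)`. -/
noncomputable def arcsinCoeff (n : ℕ) : ℝ := 4 ^ n / (n.centralBinom * (2 * n + 1))

lemma arcsinCoeff_zero : arcsinCoeff 0 = 1 := by simp [arcsinCoeff]

lemma arcsinCoeff_nonneg (n : ℕ) : 0 ≤ arcsinCoeff n := by unfold arcsinCoeff; positivity

lemma arcsinCoeff_succ (n : ℕ) :
    (2 * n + 3) * arcsinCoeff (n + 1) = (2 * n + 2) * arcsinCoeff n := by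
  have hrec : ((n : ℝ) + 1) * (n + 1).centralBinom = 2 * (2 * n + 1) * n.centralBinom :=
    mod_cast n.succ_mul_centralBinom_succ
  have hn : (n.centralBinom : ℝ) ≠ 0 := mod_cast n.centralBinom_ne_zero
  have hsucc : ((n + 1).centralBinom : ℝ) ≠ 0 := mod_cast (n + 1).centralBinom_ne_zero
  have hlin : 2 * ((n : ℝ) + 1) + 1 ≠ 0 := by positivity
  simp only [arcsinCoeff, pow_succ, Nat.cast_add, Nat.cast_one]
  field_simp
  linear_combination (-2 * (2 * n + 3) : ℝ) * hrec

lemma arcsinCoeff_le_one (n : ℕ) : arcsinCoeff n ≤ 1 := by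
  refine arcsinCoeff_zero ▸ antitone_nat_of_succ_le (fun m => ?_) n.zero_le
  have hnonneg := arcsinCoeff_nonneg m
  refine le_of_mul_le_mul_left ?_ (by positivity : (0 : ℝ) < 2 * m + 3)
  linarith [arcsinCoeff_succ m]

/-- The power series of `arcsin x / √(1 - x ^ 2)` with its `n`-th term weighted by `K n`. -/
noncomputable def arcsinSeries (K : ℕ → ℝ) (x : ℝ) : ℝ :=
  ∑' n, arcsinCoeff n * K n * x ^ (2 * n + 1)

/-- The termwise primitive of `arcsinSeries K` that vanishes at `0`. -/
noncomputable def arcsinSeriesPrimitive (K : ℕ → ℝ) (x : ℝ) : ℝ :=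
  ∑' n, arcsinCoeff n * K n / (2 * n + 2) * x ^ (2 * n + 2)

/-- The operator `K ↦ (n ↦ ∑_{1 ≤ k ≤ n} K (k - 1) / (2k)²)` on sequences, written with `j = k - 1`.
Its iterates on the constant sequence `1` are the nested sums of reciprocals of even squares. -/
noncomputable def evenSqSum (K : ℕ → ℝ) (n : ℕ) : ℝ :=
  ∑ j ∈ Finset.range n, K j / (2 * j + 2) ^ 2

section Weights

variable {K : ℕ → ℝ} {M x θ : ℝ}

lemma norm_arcsinCoeff_mul_le (hK : ∀ n, ‖K n‖ ≤ M) (n : ℕ) : ‖arcsinCoeff n * K n‖ ≤ M := by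
  rw [norm_mul, Real.norm_of_nonneg (arcsinCoeff_nonneg n)]
  exact (mul_le_of_le_one_left (norm_nonneg _) (arcsinCoeff_le_one n)).trans (hK n)

lemma hasSum_arcsinSeries (hK : ∀ n, ‖K n‖ ≤ M) (hx : ‖x‖ < 1) :
    HasSum (fun n => arcsinCoeff n * K n * x ^ (2 * n + 1)) (arcsinSeries K x) :=
  (summable_mul_pow_of_bounded (norm_arcsinCoeff_mul_le hK)
    (fun m n h => by simpa using h) hx).hasSum

lemma hasSum_deriv_arcsinSeries (hK : ∀ n, ‖K n‖ ≤ M) (hx : ‖x‖ < 1) :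
    HasSum (fun n : ℕ => arcsinCoeff n * K n * (2 * n + 1) * x ^ (2 * n))
      (deriv (arcsinSeries K) x) := by
  have hbound := norm_arcsinCoeff_mul_le hK
  have hinj : (fun n => 2 * n).Injective := fun m n h => by simpa using h
  have hderiv : deriv (arcsinSeries K) x = _ :=
    (hasDerivAt_tsum_mul_pow_add_one hbound hinj hx).deriv
  have hsum := summable_mul_add_one_mul_pow_of_bounded hbound hinj hx
  simpa [hderiv] using hsum.hasSum

lemma differentiableAt_arcsinSeries (hK : ∀ n, ‖K n‖ ≤ M) (hx : ‖x‖ < 1) :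
    DifferentiableAt ℝ (arcsinSeries K) x :=
  (hasDerivAt_tsum_mul_pow_add_one (norm_arcsinCoeff_mul_le hK)
    (fun m n h => by simpa using h) hx).differentiableAt

lemma hasDerivAt_arcsinSeriesPrimitive (hK : ∀ n, ‖K n‖ ≤ M) (hx : ‖x‖ < 1) :
    HasDerivAt (arcsinSeriesPrimitive K) (arcsinSeries K x) x := by
  have hbound (n : ℕ) : ‖arcsinCoeff n * K n / (2 * n + 2)‖ ≤ M := by
    have hn : (1 : ℝ) ≤ ‖(2 * n + 2 : ℝ)‖ := by
      rw [Real.norm_of_nonneg (by positivity)]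
      linarith [n.cast_nonneg (α := ℝ)]
    rw [norm_div]
    exact (div_le_self (norm_nonneg _) hn).trans (norm_arcsinCoeff_mul_le hK n)
  have hinj : (fun n => 2 * n + 1).Injective := fun m n h => by simpa using h
  refine (hasDerivAt_tsum_mul_pow_add_one hbound hinj hx).congr_deriv (tsum_congr fun n => ?_)
  push_cast
  field_simp
  ring

lemma one_sub_sq_mul_deriv_arcsinSeries_sub (hK : ∀ n, ‖K n‖ ≤ M) (hx : ‖x‖ < 1) :
    (1 - x ^ 2) * deriv (arcsinSeries K) x - x * arcsinSeries K x =
      K 0 + ∑' n : ℕ, (2 * n + 2) * arcsinCoeff n * (K (n + 1) - K n) * x ^ (2 * n + 2) := by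
  have hderiv := hasSum_deriv_arcsinSeries hK hx
  have htail := (hasSum_nat_add_iff' 1).2 hderiv
  have hcomb := (htail.sub (hderiv.mul_left (x ^ 2))).sub
    ((hasSum_arcsinSeries hK hx).mul_left x)
  have hterm (n : ℕ) : (2 * n + 2) * arcsinCoeff n * (K (n + 1) - K n) * x ^ (2 * n + 2) =
      arcsinCoeff (n + 1) * K (n + 1) * (2 * (n + 1 : ℕ) + 1) * x ^ (2 * (n + 1))
        - x ^ 2 * (arcsinCoeff n * K n * (2 * n + 1) * x ^ (2 * n))
        - x * (arcsinCoeff n * K n * x ^ (2 * n + 1)) := by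
    push_cast
    linear_combination (-K (n + 1) * x ^ (2 * n + 2)) * arcsinCoeff_succ n
  rw [tsum_congr hterm, hcomb.tsum_eq]
  simp only [Finset.sum_range_one, arcsinCoeff_zero, Nat.cast_zero, mul_zero, pow_zero]
  ring

lemma norm_sin_lt_one (hθ : θ ∈ Set.Ioo (-(π / 2)) (π / 2)) : ‖sin θ‖ < 1 := by
  rw [Real.norm_eq_abs, ← sq_lt_one_iff_abs_lt_one, sin_sq]
  linarith [pow_pos (cos_pos_of_mem_Ioo hθ) 2]

lemma hasDerivAt_cos_mul_arcsinSeries_sin (hK : ∀ n, ‖K n‖ ≤ M)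
    (hθ : θ ∈ Set.Ioo (-(π / 2)) (π / 2)) :
    HasDerivAt (fun t => cos t * arcsinSeries K (sin t))
      (K 0 + ∑' n : ℕ, (2 * n + 2) * arcsinCoeff n * (K (n + 1) - K n) * sin θ ^ (2 * n + 2))
      θ := by
  have hsin := norm_sin_lt_one hθ
  have hcomp := (differentiableAt_arcsinSeries hK hsin).hasDerivAt.comp θ (hasDerivAt_sin θ)
  refine ((hasDerivAt_cos θ).mul hcomp).congr_deriv ?_
  rw [← one_sub_sq_mul_deriv_arcsinSeries_sub hK hsin, ← cos_sq']
  simp only [Function.comp_apply]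
  ring

lemma evenSqSum_succ (K : ℕ → ℝ) (n : ℕ) :
    evenSqSum K (n + 1) = evenSqSum K n + K n / (2 * n + 2) ^ 2 :=
  Finset.sum_range_succ _ n

lemma norm_evenSqSum_le (hK : ∀ n, ‖K n‖ ≤ M) (n : ℕ) : ‖evenSqSum K n‖ ≤ M := by
  have hM : 0 ≤ M := (norm_nonneg _).trans (hK 0)
  -- The bound `1 - 1 / (n + 1)` absorbs the next term by telescoping.
  suffices ‖evenSqSum K n‖ ≤ M * (1 - 1 / (n + 1)) from
    this.trans (mul_le_of_le_one_right hM (sub_le_self _ (by positivity)))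
  induction n with
  | zero => simp [evenSqSum]
  | succ n ih =>
    have hterm : ‖K n / (2 * n + 2) ^ 2‖ ≤ M * (1 / (2 * n + 2) ^ 2) := by
      rw [norm_div, Real.norm_of_nonneg (by positivity : (0 : ℝ) ≤ (2 * n + 2) ^ 2),
        ← div_eq_mul_one_div]
      gcongr
      exact hK n
    have htelescope : 1 / (2 * n + 2) ^ 2 ≤ 1 / ((n : ℝ) + 1) - 1 / (n + 1 + 1) := by
      rw [div_sub_div _ _ (by positivity) (by positivity), div_le_div_iff₀ (by positivity)
        (by positivity)]
      nlinarith [n.cast_nonneg (α := ℝ)]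
    calc ‖evenSqSum K (n + 1)‖
        ≤ ‖evenSqSum K n‖ + ‖K n / (2 * n + 2) ^ 2‖ := evenSqSum_succ K n ▸ norm_add_le _ _
      _ ≤ M * (1 - 1 / (n + 1)) + M * (1 / (n + 1) - 1 / (n + 1 + 1)) := by
        gcongr
        exact hterm.trans (mul_le_mul_of_nonneg_left htelescope hM)
      _ = M * (1 - 1 / ((n + 1 : ℕ) + 1)) := by push_cast; ring

lemma norm_iterate_evenSqSum_one_le_one (k n : ℕ) : ‖evenSqSum^[k] 1 n‖ ≤ 1 := by
  induction k generalizing n with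
  | zero => simp
  | succ k ih => exact Function.iterate_succ_apply' evenSqSum k 1 ▸ norm_evenSqSum_le ih n

lemma hasDerivAt_cos_mul_arcsinSeries_one_sin (hθ : θ ∈ Set.Ioo (-(π / 2)) (π / 2)) :
    HasDerivAt (fun t => cos t * arcsinSeries 1 (sin t)) 1 θ := by
  simpa using hasDerivAt_cos_mul_arcsinSeries_sin (K := 1) (M := 1) (by simp) hθ

lemma hasDerivAt_cos_mul_arcsinSeries_evenSqSum_sin (hK : ∀ n, ‖K n‖ ≤ M)
    (hθ : θ ∈ Set.Ioo (-(π / 2)) (π / 2)) :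
    HasDerivAt (fun t => cos t * arcsinSeries (evenSqSum K) (sin t))
      (arcsinSeriesPrimitive K (sin θ)) θ := by
  refine (hasDerivAt_cos_mul_arcsinSeries_sin (norm_evenSqSum_le hK) hθ).congr_deriv ?_
  have hzero : evenSqSum K 0 = 0 := Finset.sum_range_zero _
  rw [hzero, zero_add]
  refine tsum_congr fun n => ?_
  rw [evenSqSum_succ, add_sub_cancel_left]
  field_simp

lemma hasDerivAt_arcsinSeriesPrimitive_sin (hK : ∀ n, ‖K n‖ ≤ M)
    (hθ : θ ∈ Set.Ioo (-(π / 2)) (π / 2)) :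
    HasDerivAt (fun t => arcsinSeriesPrimitive K (sin t)) (cos θ * arcsinSeries K (sin θ)) θ :=
  ((hasDerivAt_arcsinSeriesPrimitive hK (norm_sin_lt_one hθ)).comp θ
    (hasDerivAt_sin θ)).congr_deriv (mul_comm _ _)

end Weights

lemma eqOn_pow_div_factorial_of_hasDerivAt {f : ℝ → ℝ} {s : Set ℝ} {m : ℕ} (hs : IsOpen s)
    (hs' : IsPreconnected s) (h0 : 0 ∈ s) (hf0 : f 0 = 0)
    (hf : ∀ t ∈ s, HasDerivAt f (t ^ m / m.factorial) t) :
    s.EqOn f fun t => t ^ (m + 1) / (m + 1).factorial := by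
  have hpow (t : ℝ) : HasDerivAt (fun t : ℝ => t ^ (m + 1) / (m + 1).factorial)
      (t ^ m / m.factorial) t := by
    refine ((hasDerivAt_pow (m + 1) t).div_const _).congr_deriv ?_
    rw [Nat.factorial_succ, Nat.cast_mul, Nat.add_sub_cancel]
    field_simp
  exact hs.eqOn_of_deriv_eq hs' (fun t ht => (hf t ht).differentiableAt.differentiableWithinAt)
    (fun t _ => (hpow t).differentiableAt.differentiableWithinAt)
    (fun t ht => (hf t ht).deriv.trans (hpow t).deriv.symm) h0 (by simp [hf0])

theorem cos_mul_arcsinSeries_iterate_evenSqSum_sin (k : ℕ) :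
    (Set.Ioo (-(π / 2)) (π / 2)).EqOn
      (fun θ => cos θ * arcsinSeries (evenSqSum^[k] 1) (sin θ))
      fun θ => θ ^ (2 * k + 1) / (2 * k + 1).factorial := by
  have h0 : (0 : ℝ) ∈ Set.Ioo (-(π / 2)) (π / 2) := ⟨by simp [pi_pos], by positivity⟩
  induction k with
  | zero =>
    refine eqOn_pow_div_factorial_of_hasDerivAt isOpen_Ioo isPreconnected_Ioo h0
      (by simp [arcsinSeries]) fun θ hθ => ?_
    simpa using hasDerivAt_cos_mul_arcsinSeries_one_sin hθ
  | succ k ih =>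
    have hbound := norm_iterate_evenSqSum_one_le_one k
    have hprimitive := eqOn_pow_div_factorial_of_hasDerivAt isOpen_Ioo isPreconnected_Ioo h0
      (by simp [arcsinSeriesPrimitive]) fun θ hθ =>
        (hasDerivAt_arcsinSeriesPrimitive_sin hbound hθ).congr_deriv (ih hθ)
    refine eqOn_pow_div_factorial_of_hasDerivAt isOpen_Ioo isPreconnected_Ioo h0
      (by simp [arcsinSeries]) fun θ hθ => ?_
    rw [Function.iterate_succ_apply']
    exact (hasDerivAt_cos_mul_arcsinSeries_evenSqSum_sin hbound hθ).congr_deriv (hprimitive hθ)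

lemma sqrt_one_sub_sq_mul_arcsinSeries_iterate_evenSqSum (k : ℕ) {x : ℝ} (hx : x ∈ Set.Ioo (-1) 1) :
    √(1 - x ^ 2) * arcsinSeries (evenSqSum^[k] 1) x =
      arcsin x ^ (2 * k + 1) / (2 * k + 1).factorial := by
  simpa [cos_arcsin, sin_arcsin hx.1.le hx.2.le] using
    cos_mul_arcsinSeries_iterate_evenSqSum_sin k
      ⟨neg_pi_div_two_lt_arcsin.2 hx.1, arcsin_lt_pi_div_two.2 hx.2⟩

lemma evenSqSum_one (n : ℕ) : evenSqSum 1 n = ∑ k ∈ Finset.Icc 1 n, 1 / (2 * (k : ℝ)) ^ 2 := by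
  have hshift := Finset.sum_Ico_add' (fun k : ℕ => 1 / (2 * (k : ℝ)) ^ 2) 0 n 1
  rw [← Finset.range_eq_Ico, zero_add, Finset.Ico_add_one_right_eq_Icc] at hshift
  simp only [← hshift, evenSqSum, Pi.one_apply, Nat.cast_add, Nat.cast_one, mul_add, mul_one]

lemma sqrt_div_two_mem_Ioo {y : ℝ} (hy0 : 0 < y) (hy4 : y < 4) : √y / 2 ∈ Set.Ioo 0 1 := by
  refine ⟨by positivity, ?_⟩
  rw [div_lt_one two_pos, sqrt_lt' two_pos]
  linarith

lemma arcsinSeries_evenSqSum_one_sqrt_div_two {y : ℝ} (hy0 : 0 < y) (hy4 : y < 4) :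
    arcsinSeries (evenSqSum 1) (√y / 2) = arcsin (√y / 2) ^ 3 / (3 * √(4 - y)) := by
  obtain ⟨hpos, hlt⟩ := sqrt_div_two_mem_Ioo hy0 hy4
  have hval : √(1 - (√y / 2) ^ 2) * arcsinSeries (evenSqSum 1) (√y / 2) =
      arcsin (√y / 2) ^ 3 / 6 := by
    simpa [Nat.factorial] using
      sqrt_one_sub_sq_mul_arcsinSeries_iterate_evenSqSum 1 ⟨by linarith, hlt⟩
  have hcos : √(1 - (√y / 2) ^ 2) = √(4 - y) / 2 := by
    rw [div_pow, sq_sqrt hy0.le, show 1 - y / 2 ^ 2 = (4 - y) / 2 ^ 2 by ring,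
      sqrt_div' _ (by positivity), sqrt_sq zero_le_two]
  have hne : √(4 - y) ≠ 0 := (sqrt_pos.2 (sub_pos.2 hy4)).ne'
  rw [hcos] at hval
  field_simp
  linear_combination 6 * hval

lemma hasSum_pow_div_centralBinom_mul_evenSqSum {y : ℝ} (hy0 : 0 < y) (hy4 : y < 4) :
    HasSum (fun n : ℕ => y ^ n / (n.centralBinom * (2 * n + 1)) * evenSqSum 1 n)
      (2 * arcsin (√y / 2) ^ 3 / (3 * √(y * (4 - y)))) := by
  obtain ⟨hpos, hlt⟩ := sqrt_div_two_mem_Ioo hy0 hy4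
  have hsum := (hasSum_arcsinSeries (norm_iterate_evenSqSum_one_le_one 1)
    (by rwa [Real.norm_of_nonneg hpos.le])).mul_left (√y / 2)⁻¹
  have hterm (n : ℕ) : y ^ n / (n.centralBinom * (2 * n + 1)) * evenSqSum 1 n =
      (√y / 2)⁻¹ * (arcsinCoeff n * evenSqSum 1 n * (√y / 2) ^ (2 * n + 1)) := by
    have hpow : (√y / 2) ^ (2 * n + 1) = y ^ n / 4 ^ n * (√y / 2) := by
      rw [pow_succ, pow_mul, div_pow, sq_sqrt hy0.le, ← div_pow]
      norm_num
    rw [hpow, arcsinCoeff]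
    field_simp
  have hvalue : 2 * arcsin (√y / 2) ^ 3 / (3 * √(y * (4 - y))) =
      (√y / 2)⁻¹ * arcsinSeries (evenSqSum 1) (√y / 2) := by
    rw [arcsinSeries_evenSqSum_one_sqrt_div_two hy0 hy4, sqrt_mul hy0.le]
    field_simp
  simpa only [hterm, hvalue, Function.iterate_one] using hsum

lemma hasSum_subtype_prod_of_nonneg {α β : Type*} {f : α × β → ℝ} {P : α → β → Prop}
    {t : α → Finset β} {s : ℝ} (hf : ∀ p, 0 ≤ f p) (hP : ∀ a b, P a b ↔ b ∈ t a)
    (h : HasSum (fun a => ∑ b ∈ t a, f (a, b)) s) :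
    HasSum (fun p : {p : α × β // P p.1 p.2} => f p) s := by
  obtain rfl : P = fun a b => b ∈ t a := funext₂ fun a b => propext (hP a b)
  have hfiber (a : α) : HasSum (fun b : {b // b ∈ t a} => f (a, b)) (∑ b ∈ t a, f (a, b)) :=
    (t a).hasSum fun b => f (a, b)
  rw [← (Equiv.subtypeProdEquivSigmaSubtype fun a b => b ∈ t a).symm.hasSum_iff]
  refine h.sigma_of_hasSum hfiber ((summable_sigma_of_nonneg fun _ => hf _).2
    ⟨fun a => (hfiber a).summable, ?_⟩)
  exact h.summable.congr fun a => (hfiber a).tsum_eq.symm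

theorem stmt19_general {y : ℝ} (hy0 : 0 < y) (hy4 : y < 4) :
    HasSum (fun p : {p : ℕ × ℕ // p.2 ≤ p.1 ∧ 1 ≤ p.2} =>
      y ^ p.1.1 / ((Nat.choose (2 * p.1.1) p.1.1 : ℝ) * (2 * (p.1.1 : ℝ) + 1) *
        (2 * (p.1.2 : ℝ)) ^ 2))
      (2 * arcsin (√y / 2) ^ 3 / (3 * √(y * (4 - y)))) := by
  refine hasSum_subtype_prod_of_nonneg (P := fun n m => m ≤ n ∧ 1 ≤ m)
    (f := fun p : ℕ × ℕ => y ^ p.1 / ((Nat.choose (2 * p.1) p.1 : ℝ) * (2 * (p.1 : ℝ) + 1) *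
        (2 * (p.2 : ℝ)) ^ 2))
    (t := Finset.Icc 1) (fun p => by positivity) (fun n m => by rw [Finset.mem_Icc, and_comm]) ?_
  refine (hasSum_pow_div_centralBinom_mul_evenSqSum hy0 hy4).congr_fun fun n => ?_
  simp only [evenSqSum_one, Finset.mul_sum, div_mul_div_comm, mul_one, Nat.centralBinom]

/-- `∑_{n₁ ≥ n₂ ≥ 1} 3^{n₁}/(binom(2n₁,n₁)(2n₁+1)(2n₂)²) = 2π³/(81√3)`. -/
theorem stmt19 :
    (∑' p : {p : ℕ × ℕ // p.2 ≤ p.1 ∧ 1 ≤ p.2},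
      (3 : ℝ) ^ p.1.1 /
        ((Nat.choose (2 * p.1.1) p.1.1 : ℝ) * (2 * (p.1.1 : ℝ) + 1) *
          (2 * (p.1.2 : ℝ)) ^ 2)) =
    2 * π ^ 3 / (81 * Real.sqrt 3) := by
  have harcsin : arcsin (√3 / 2) = π / 3 := by
    rw [← sin_pi_div_three, arcsin_sin] <;> linarith [pi_pos]
  rw [(stmt19_general three_pos (by norm_num)).tsum_eq, harcsin,
    show (3 : ℝ) * (4 - 3) = 3 by norm_num]
  field_simp
  norm_num
end
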